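/- arXiv:2009.08327 — 2 statements merged into one kernel-verified Lean document; each statement's English description precedes it below -/
import Mathlib

section
/- Let N and s be integers with 0 ≤ s < N - 2 and set n = N - s. Let α_0 < α_1 < ... < α_n be integers with 0 ≤ α_0 and α_n ≤ N, and define y_k = -cos(α_k π / N), so that y_0 < y_1 < ... < y_n. Then for every x ∈ [-1, 1] with x ≠ y_i for all i, Σ_{i=0}^n 1/|x - y_i| ≤ ((s+1)(s+3)π²/4 + 1)·(1 + π²(s+1)·ln(N - s)) · |Σ_{j=0}^n (-1)^j/(x - y_j)|. -/
open Finset Real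

/-!
Write `x = -cos θ` and look at the nodes on one side of `x`, at increasing distances
`d 0, d 1, …`. If `d 0 ≤ R * (d 1 - d 0)`, the alternating sum `∑ (-1) ^ i / d i` is at least
`1 / d 0 - 1 / d 1 ≥ 1 / ((R + 1) * d 0)`; if `d i ≥ (i + 1) / C * d 0`, the sum `∑ 1 / d i` is at
most `1 / d 0` plus `C / d 0` times a harmonic sum. Hence the second sum is at most
`(R + 1) * (1 + C * log n)` times the first. The signs in Berrut's denominator alternate in such a
way that the alternating sums of the two sides add up rather than cancel.

The angles of the nodes are at least `π / N` apart and at most `s` steps are missing, so the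
distances between angles satisfy such estimates; by `cos p - cos q = 2 sin ((p + q) / 2)
sin ((q - p) / 2)` they pass to the nodes, each sine costing a factor `π / 2`. The reflection
`θ ↦ π - θ` exchanges the two sides.
-/

theorem sin_le_mul_sin_of_le_mul {u v K : ℝ} (hu : 0 ≤ u) (hv : 0 ≤ v) (hv' : v ≤ π / 2)
    (hK : 0 ≤ K) (huv : u ≤ K * v) : sin u ≤ K * (π / 2) * sin v :=
  calc sin u ≤ K * v := (sin_le hu).trans huv
    _ = K * (π / 2) * (2 / π * v) := by field_simp
    _ ≤ K * (π / 2) * sin v := by gcongr; exact mul_le_sin hv hv'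

theorem sin_le_mul_sin_of_le_of_le_mul {u v K : ℝ} (hv : 0 ≤ v) (hvu : v ≤ u) (hu : u ≤ π)
    (hK : 1 ≤ K) (huv : u ≤ K * v) : sin u ≤ K * (π / 2) * sin v := by
  rcases le_total v (π / 2) with hv' | hv'
  · exact sin_le_mul_sin_of_le_mul (hv.trans hvu) hv hv' (zero_le_one.trans hK) huv
  · have hsin : sin u ≤ sin v := by
      rw [← sin_pi_sub u, ← sin_pi_sub v]
      exact sin_le_sin_of_le_of_le_pi_div_two (by linarith) (by linarith) (by linarith)
    have hone : 1 ≤ K * (π / 2) := one_le_mul_of_one_le_of_one_le hK (by linarith [two_le_pi])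
    exact hsin.trans (le_mul_of_one_le_left (sin_nonneg_of_nonneg_of_le_pi hv (hvu.trans hu)) hone)

theorem cos_sub_cos_eq_two_mul_sin_mul_sin (p q : ℝ) :
    cos p - cos q = 2 * sin ((p + q) / 2) * sin ((q - p) / 2) := by
  rw [cos_sub_cos, ← neg_sub q p, neg_div, sin_neg]
  ring

theorem cos_sub_cos_le_mul_cos_sub_cos {p q p' q' K L : ℝ} (hpq : p ≤ q) (hq : q ≤ π)
    (hp' : 0 ≤ p') (hpq' : p' ≤ q') (hq' : q' ≤ π) (hsum : p' + q' ≤ p + q) (hK : 1 ≤ K)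
    (hL : 0 ≤ L) (hsumK : p + q ≤ K * (p' + q')) (hsubL : q - p ≤ L * (q' - p')) :
    cos p - cos q ≤ K * L * (π ^ 2 / 4) * (cos p' - cos q') := by
  have hsin_add : sin ((p + q) / 2) ≤ K * (π / 2) * sin ((p' + q') / 2) :=
    sin_le_mul_sin_of_le_of_le_mul (by linarith) (by linarith) (by linarith) hK (by linarith)
  have hsin_sub : sin ((q - p) / 2) ≤ L * (π / 2) * sin ((q' - p') / 2) :=
    sin_le_mul_sin_of_le_mul (by linarith) (by linarith) (by linarith) hL (by linarith)
  have hsub_nonneg : 0 ≤ sin ((q - p) / 2) :=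
    sin_nonneg_of_nonneg_of_le_pi (by linarith) (by linarith)
  have hadd_nonneg : 0 ≤ sin ((p' + q') / 2) :=
    sin_nonneg_of_nonneg_of_le_pi (by linarith) (by linarith)
  rw [cos_sub_cos_eq_two_mul_sin_mul_sin p q, cos_sub_cos_eq_two_mul_sin_mul_sin p' q']
  calc 2 * sin ((p + q) / 2) * sin ((q - p) / 2)
      ≤ 2 * (K * (π / 2) * sin ((p' + q') / 2)) * (L * (π / 2) * sin ((q' - p') / 2)) := by
        gcongr
    _ = K * L * (π ^ 2 / 4) * (2 * sin ((p' + q') / 2) * sin ((q' - p') / 2)) := by ring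

theorem cos_sub_cos_le_mul_of_adjacent {p q r h s : ℝ} (hs : 0 ≤ s) (hp : 0 ≤ p)
    (hpq : p + h ≤ q) (hqr : q ≤ r) (hr : r ≤ π) (hrq : r ≤ q + (s + 1) * h) :
    cos q - cos r ≤ (s + 1) * (s + 3) * π ^ 2 / 4 * (cos p - cos q) := by
  have hh : 0 ≤ h := nonneg_of_mul_nonneg_right (by linarith : 0 ≤ (s + 1) * h) (by linarith)
  have hsum : q + r ≤ (s + 3) * (p + q) := by nlinarith
  have hsub : r - q ≤ (s + 1) * (q - p) := by nlinarith
  calc cos q - cos r ≤ (s + 3) * (s + 1) * (π ^ 2 / 4) * (cos p - cos q) := by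
        apply cos_sub_cos_le_mul_cos_sub_cos <;> linarith
    _ = (s + 1) * (s + 3) * π ^ 2 / 4 * (cos p - cos q) := by ring

theorem mul_cos_sub_cos_le_of_common_endpoint {p q r c S : ℝ} (hp : 0 ≤ p) (hpq : p ≤ q)
    (hqr : q ≤ r) (hr : r ≤ π) (hc : 0 < c) (hS : 0 ≤ S) (hsub : (r - q) * c ≤ S * (r - p)) :
    c * (cos q - cos r) ≤ π ^ 2 * S / 2 * (cos p - cos r) := by
  have hsub' : r - q ≤ S / c * (r - p) := by rwa [div_mul_eq_mul_div, le_div_iff₀ hc]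
  calc c * (cos q - cos r) ≤ c * (2 * (S / c) * (π ^ 2 / 4) * (cos p - cos r)) := by
        gcongr
        apply cos_sub_cos_le_mul_cos_sub_cos <;> first | positivity | linarith
    _ = π ^ 2 * S / 2 * (cos p - cos r) := by field_simp; ring

theorem alternating_sum_mem_Icc {R : Type*} [Ring R] [PartialOrder R] [IsOrderedAddMonoid R] {m : ℕ}
    {f : ℕ → R} (hf : AntitoneOn f (Set.Iic m)) (hm : 0 ≤ f m) :
    ∑ i ∈ range (m + 1), (-1) ^ i * f i ∈ Set.Icc 0 (f 0) := by
  induction m generalizing f with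
  | zero => simpa using hm
  | succ m ih =>
    have htail := ih (f := fun i => f (i + 1))
      (fun i hi j hj hij => hf (Nat.succ_le_succ hi) (Nat.succ_le_succ hj) (Nat.succ_le_succ hij))
      hm
    have hle : f 1 ≤ f 0 := hf (Set.mem_Iic.2 (by lia)) (Set.mem_Iic.2 (by lia)) zero_le_one
    rw [sum_range_succ']
    simp only [pow_succ, mul_neg, mul_one, neg_mul, sum_neg_distrib, pow_zero, one_mul,
      neg_add_eq_sub]
    exact ⟨sub_nonneg.2 (htail.2.trans hle), sub_le_self _ htail.1⟩

section DistanceSums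

variable {𝕜 : Type*} [Field 𝕜]

theorem alternating_sum_one_div_sub_eq (y : ℕ → 𝕜) (x : 𝕜) (l r : ℕ) :
    ∑ i ∈ range (l + r), (-1) ^ i / (x - y i) =
      (-1) ^ (l + 1) * (∑ i ∈ range l, (-1) ^ i / (x - y (l - 1 - i)) +
        ∑ i ∈ range r, (-1) ^ i / (y (l + i) - x)) := by
  rw [sum_range_add, ← sum_range_reflect, mul_add, mul_sum, mul_sum]
  congr 1
  · refine sum_congr rfl fun i hi => ?_
    obtain ⟨j, rfl⟩ := Nat.exists_eq_add_of_lt (mem_range.1 hi)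
    rw [show i + j + 1 - 1 - i = j by lia, ← mul_div_assoc, ← pow_add,
      show i + j + 1 + 1 + i = 2 * (i + 1) + j by lia, pow_add, pow_mul]
    simp
  · refine sum_congr rfl fun i _ => ?_
    rw [← neg_sub (y (l + i)) x, div_neg, pow_add, pow_succ]
    ring

variable [LinearOrder 𝕜] [IsStrictOrderedRing 𝕜]

theorem one_div_le_alternating_sum_one_div {m : ℕ} {d : ℕ → 𝕜} {R : 𝕜} (hR : 0 ≤ R) (hpos : 0 < d 0)
    (hmono : MonotoneOn d (Set.Iic m)) (hgap : 0 < m → d 0 ≤ R * (d 1 - d 0)) :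
    1 / ((R + 1) * d 0) ≤ ∑ i ∈ range (m + 1), (-1) ^ i / d i := by
  have hd : ∀ i ≤ m, 0 < d i := fun i hi =>
    hpos.trans_le (hmono (Set.mem_Iic.2 m.zero_le) hi i.zero_le)
  rcases m with _ | m
  · simpa using one_div_le_one_div_of_le hpos (le_mul_of_one_le_left hpos.le (by linarith))
  have htail : ∑ i ∈ range (m + 1), (-1) ^ i * (1 / d (i + 1)) ≤ 1 / d 1 :=
    (alternating_sum_mem_Icc (f := fun i => 1 / d (i + 1))
      (fun i hi j hj hij => one_div_le_one_div_of_le (hd _ (Nat.succ_le_succ hi))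
        (hmono (Nat.succ_le_succ hi) (Nat.succ_le_succ hj) (Nat.succ_le_succ hij)))
      (one_div_pos.2 (hd _ le_rfl)).le).2
  have hsplit : ∑ i ∈ range (m + 1 + 1), (-1) ^ i / d i =
      1 / d 0 - ∑ i ∈ range (m + 1), (-1) ^ i * (1 / d (i + 1)) := by
    rw [sum_range_succ', sub_eq_neg_add, ← sum_neg_distrib]
    simp [pow_succ, div_eq_mul_inv]
  have hd1 : 0 < d 1 := hd 1 (by lia)
  have hfirst : 1 / ((R + 1) * d 0) ≤ 1 / d 0 - 1 / d 1 := by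
    rw [div_sub_div _ _ hpos.ne' hd1.ne', div_le_div_iff₀ (by positivity) (by positivity)]
    nlinarith [hgap m.succ_pos]
  linarith

theorem sum_one_div_abs_sub_eq {y : ℕ → 𝕜} {x : 𝕜} {l r : ℕ} (hl : ∀ i < l, y i < x)
    (hr : ∀ i < r, x < y (l + i)) :
    ∑ i ∈ range (l + r), 1 / |x - y i| =
      ∑ i ∈ range l, 1 / (x - y (l - 1 - i)) + ∑ i ∈ range r, 1 / (y (l + i) - x) := by
  rw [sum_range_add, ← sum_range_reflect]
  congr 1
  · refine sum_congr rfl fun i hi => ?_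
    rw [abs_of_pos (sub_pos.2 (hl _ (by have := mem_range.1 hi; lia)))]
  · refine sum_congr rfl fun i hi => ?_
    rw [abs_sub_comm, abs_of_pos (sub_pos.2 (hr i (mem_range.1 hi)))]

theorem sum_one_div_abs_sub_le_of_sides {y : ℕ → 𝕜} {x K : 𝕜} {l r : ℕ} (hK : 0 ≤ K)
    (hl : ∀ i < l, y i < x) (hr : ∀ i < r, x < y (l + i))
    (hleft : ∑ i ∈ range l, 1 / (x - y (l - 1 - i)) ≤
      K * ∑ i ∈ range l, (-1) ^ i / (x - y (l - 1 - i)))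
    (hright : ∑ i ∈ range r, 1 / (y (l + i) - x) ≤
      K * ∑ i ∈ range r, (-1) ^ i / (y (l + i) - x)) :
    ∑ i ∈ range (l + r), 1 / |x - y i| ≤ K * |∑ i ∈ range (l + r), (-1) ^ i / (x - y i)| := by
  rw [sum_one_div_abs_sub_eq hl hr, alternating_sum_one_div_sub_eq, abs_mul, abs_neg_one_pow,
    one_mul]
  grw [hleft, hright, ← mul_add, ← le_abs_self]

end DistanceSums

theorem sum_one_div_le_one_add_mul_log_div {m : ℕ} {d : ℕ → ℝ} {C : ℝ} (hC : 0 ≤ C)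
    (hd : ∀ i ≤ m, 0 < d i) (hgrowth : ∀ i ≤ m, (i + 1) * d 0 ≤ C * d i) :
    ∑ i ∈ range (m + 1), 1 / d i ≤ (1 + C * log (m + 1)) / d 0 := by
  have hpos : 0 < d 0 := hd 0 m.zero_le
  have hharmonic : ∑ i ∈ range m, 1 / ((i : ℝ) + 1 + 1) ≤ log (m + 1) := by
    have := harmonic_le_one_add_log (m + 1)
    rw [harmonic, sum_range_succ'] at this
    push_cast at this
    simp only [one_div]
    linarith
  have hterm : ∀ i ∈ range m, 1 / d (i + 1) ≤ C / d 0 * (1 / ((i : ℝ) + 1 + 1)) := by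
    intro i hi
    have hi' : i + 1 ≤ m := mem_range.1 hi
    have := hgrowth (i + 1) hi'
    push_cast at this
    rw [div_mul_div_comm, mul_one, div_le_div_iff₀ (hd _ hi') (by positivity)]
    linarith
  calc ∑ i ∈ range (m + 1), 1 / d i = ∑ i ∈ range m, 1 / d (i + 1) + 1 / d 0 :=
        sum_range_succ' _ _
    _ ≤ C / d 0 * ∑ i ∈ range m, 1 / ((i : ℝ) + 1 + 1) + 1 / d 0 := by
        rw [mul_sum]; gcongr with i hi; exact hterm i hi
    _ ≤ C / d 0 * log (m + 1) + 1 / d 0 := by gcongr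
    _ = (1 + C * log (m + 1)) / d 0 := by ring

theorem sum_one_div_le_mul_alternating_sum {m n : ℕ} (hmn : m ≤ n) {d : ℕ → ℝ} {R C : ℝ}
    (hR : 0 ≤ R) (hC : 0 ≤ C) (hd : ∀ i < m, 0 < d i) (hmono : MonotoneOn d (Set.Iio m))
    (hgap : 1 < m → d 0 ≤ R * (d 1 - d 0)) (hgrowth : ∀ i < m, (i + 1) * d 0 ≤ C * d i) :
    ∑ i ∈ range m, 1 / d i ≤
      (R + 1) * (1 + C * log n) * ∑ i ∈ range m, (-1) ^ i / d i := by
  rcases m with _ | m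
  · simp
  simp only [Order.lt_add_one_iff] at hd hgrowth
  replace hmono : MonotoneOn d (Set.Iic m) := hmono.mono fun _ => Nat.lt_succ_of_le
  have hpos : 0 < d 0 := hd 0 m.zero_le
  have hlog : log (m + 1) ≤ log n := log_le_log (by positivity) (by exact_mod_cast hmn)
  have : 0 ≤ log n := log_natCast_nonneg n
  calc ∑ i ∈ range (m + 1), 1 / d i ≤ (1 + C * log (m + 1)) / d 0 :=
        sum_one_div_le_one_add_mul_log_div hC hd hgrowth
    _ ≤ (1 + C * log n) / d 0 := by gcongr
    _ = (R + 1) * (1 + C * log n) * (1 / ((R + 1) * d 0)) := by field_simp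
    _ ≤ (R + 1) * (1 + C * log n) * ∑ i ∈ range (m + 1), (-1) ^ i / d i := by
        gcongr
        exact one_div_le_alternating_sum_one_div hR hpos hmono fun hm => hgap (by lia)

theorem exists_forall_lt_and_forall_gt {α : Type*} [LinearOrder α] {m : ℕ} {f : ℕ → α} {x : α}
    (hf : MonotoneOn f (Set.Iio m)) (hx : ∀ i < m, x ≠ f i) :
    ∃ l r, l + r = m ∧ (∀ i < l, f i < x) ∧ ∀ i < r, x < f (l + i) := by
  induction m with
  | zero => exact ⟨0, 0, by simp⟩
  | succ m ih =>
    rcases (hx m m.lt_succ_self).lt_or_gt with hxm | hxm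
    · obtain ⟨l, r, rfl, hl, hr⟩ := ih (hf.mono (Set.Iio_subset_Iio m.le_succ))
        fun i hi => hx i (by lia)
      refine ⟨l, r + 1, rfl, hl, fun i hi => ?_⟩
      rcases Nat.lt_succ_iff_lt_or_eq.1 hi with hi | rfl
      exacts [hr i hi, hxm]
    · exact ⟨m + 1, 0, rfl, fun i hi => (hf hi m.lt_succ_self (by lia)).trans_lt hxm, by simp⟩

/-- Antitonicity of `b i + i * h` encodes that consecutive angles are at least `h` apart. -/
theorem sum_one_div_cos_sub_cos_le {m n : ℕ} (hmn : m ≤ n) {b : ℕ → ℝ} {θ h s : ℝ} (hh : 0 ≤ h)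
    (hs : 0 ≤ s) (hb : AntitoneOn (fun i => b i + i * h) (Set.Iio m)) (hb0 : ∀ i < m, 0 ≤ b i)
    (hbθ : ∀ i < m, b i < θ) (hθ : θ ≤ π) (hθb : 0 < m → θ ≤ b 0 + (s + 1) * h) :
    ∑ i ∈ range m, 1 / (cos (b i) - cos θ) ≤
      ((s + 1) * (s + 3) * π ^ 2 / 4 + 1) * (1 + π ^ 2 * (s + 1) / 2 * log n) *
        ∑ i ∈ range m, (-1) ^ i / (cos (b i) - cos θ) := by
  have hspace : ∀ i j, i ≤ j → j < m → b j + j * h ≤ b i + i * h := fun i j hij hj =>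
    hb (Set.mem_Iio.2 (hij.trans_lt hj)) hj hij
  apply sum_one_div_le_mul_alternating_sum hmn (by positivity) (by positivity)
  · intro i hi
    exact sub_pos.2 (cos_lt_cos_of_nonneg_of_le_pi (hb0 i hi) hθ (hbθ i hi))
  · intro i hi j hj hij
    have hji : b j ≤ b i := by
      have := hspace i j hij hj
      have : (i : ℝ) * h ≤ j * h := by gcongr
      linarith
    exact sub_le_sub_right
      (cos_le_cos_of_nonneg_of_le_pi (hb0 j hj) ((hbθ i hi).le.trans hθ) hji) _
  · intro hm
    have h01 : b 1 + h ≤ b 0 := by simpa using hspace 0 1 zero_le_one hm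
    rw [sub_sub_sub_cancel_right]
    exact cos_sub_cos_le_mul_of_adjacent hs (hb0 1 hm) h01 (hbθ 0 (by lia)).le hθ
      (hθb (by lia))
  · intro i hi
    have hm : 0 < m := by lia
    have h0i : b i + i * h ≤ b 0 := by simpa using hspace 0 i i.zero_le hi
    have hi0 : 0 ≤ i * h := by positivity
    have hδ : 0 ≤ θ - b 0 := sub_nonneg.2 (hbθ 0 hm).le
    have hδs : θ - b 0 ≤ (s + 1) * h := by linarith [hθb hm]
    refine mul_cos_sub_cos_le_of_common_endpoint (hb0 i hi) (by linarith) (hbθ 0 hm).le hθ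
      (by positivity) (by positivity) ?_
    calc (θ - b 0) * (i + 1) = (θ - b 0) + i * (θ - b 0) := by ring
      _ ≤ (s + 1) * (θ - b 0) + i * ((s + 1) * h) := by
        gcongr
        exact le_mul_of_one_le_left hδ (by linarith)
      _ = (s + 1) * (θ - b 0 + i * h) := by ring
      _ ≤ (s + 1) * (θ - b i) := by gcongr; linarith

section SeparatedAngles

variable {n l r : ℕ} {a : ℕ → ℝ} {θ h s : ℝ}

theorem monotoneOn_sub_mul_of_add_le (ha : ∀ k < n, a k + h ≤ a (k + 1)) :
    MonotoneOn (fun k => a k - k * h) (Set.Iic n) := by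
  refine monotoneOn_of_le_add_one Set.ordConnected_Iic fun k _ _ hk => ?_
  have := ha k hk
  push_cast
  linarith

theorem mul_le_of_add_le (ha0 : 0 ≤ a 0) (ha : ∀ k < n, a k + h ≤ a (k + 1)) :
    ∀ k ≤ n, k * h ≤ a k := fun k hk => by
  have := monotoneOn_sub_mul_of_add_le ha (Set.mem_Iic.2 n.zero_le) hk k.zero_le
  simp only [Nat.cast_zero, zero_mul] at this
  linarith

theorem le_add_mul_of_add_le (ha : ∀ k < n, a k + h ≤ a (k + 1)) (han : a n ≤ (n + s) * h) :
    ∀ k ≤ n, a k ≤ (k + s) * h := fun k hk => by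
  have := monotoneOn_sub_mul_of_add_le ha hk (Set.mem_Iic.2 le_rfl) hk
  simp only at this
  linarith

theorem le_pred_add_mul_of_forall_lt (hh : 0 ≤ h) (hlow : ∀ k ≤ n, k * h ≤ a k)
    (hup : ∀ k ≤ n, a k ≤ (k + s) * h) (hlr : l + r = n + 1) (hr : ∀ i < r, θ < a (l + i))
    (hθ : θ ≤ (n + s) * h) (hl : 0 < l) : θ ≤ a (l - 1) + (s + 1) * h := by
  have hθ_le : θ ≤ (l + s) * h := by
    rcases r.eq_zero_or_pos with rfl | hr0
    · obtain rfl : l = n + 1 := hlr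
      push_cast
      linarith
    · exact (hr 0 hr0).le.trans (hup l (by lia))
  have := hlow (l - 1) (by lia)
  rw [Nat.cast_pred hl] at this
  linarith

theorem le_add_mul_of_forall_gt (hh : 0 ≤ h) (hlow : ∀ k ≤ n, k * h ≤ a k)
    (hup : ∀ k ≤ n, a k ≤ (k + s) * h) (hl : ∀ i < l, a i < θ) (hθ : 0 ≤ θ) (hln : l ≤ n) :
    a l ≤ θ + (s + 1) * h := by
  have hle_θ : (l - 1) * h ≤ θ := by
    rcases l with _ | l
    · push_cast
      linarith
    · push_cast
      linarith [hlow l (by lia), hl l l.lt_succ_self]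
  linarith [hup l hln]

theorem sum_one_div_cos_sub_cos_le_left (hl : l ≤ n + 1) (hh : 0 ≤ h) (hs : 0 ≤ s)
    (ha : MonotoneOn (fun k => a k - k * h) (Set.Iic n)) (ha0 : ∀ k ≤ n, 0 ≤ a k)
    (haθ : ∀ k < l, a k < θ) (hθ : θ ≤ π) (hgap : 0 < l → θ ≤ a (l - 1) + (s + 1) * h) :
    ∑ i ∈ range l, 1 / (cos (a (l - 1 - i)) - cos θ) ≤
      ((s + 1) * (s + 3) * π ^ 2 / 4 + 1) * (1 + π ^ 2 * (s + 1) / 2 * log (n + 1)) *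
        ∑ i ∈ range l, (-1) ^ i / (cos (a (l - 1 - i)) - cos θ) := by
  have hanti : AntitoneOn (fun i : ℕ => a (l - 1 - i) + i * h) (Set.Iio l) := by
    intro i hi j hj hij
    rw [Set.mem_Iio] at hi hj
    have := ha (Set.mem_Iic.2 (by lia)) (Set.mem_Iic.2 (by lia))
      (by lia : l - 1 - j ≤ l - 1 - i)
    simp only [Nat.sub_sub, Nat.cast_sub (by lia : 1 + i ≤ l),
      Nat.cast_sub (by lia : 1 + j ≤ l)] at this ⊢
    push_cast at this
    linarith
  exact_mod_cast sum_one_div_cos_sub_cos_le hl hh hs hanti (fun i _ => ha0 _ (by lia))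
    (fun i hi => haθ _ (by lia)) hθ hgap

theorem sum_one_div_cos_sub_cos_le_right (hlr : l + r = n + 1) (hh : 0 ≤ h) (hs : 0 ≤ s)
    (ha : MonotoneOn (fun k => a k - k * h) (Set.Iic n)) (haπ : ∀ k ≤ n, a k ≤ π)
    (haθ : ∀ k < r, θ < a (l + k)) (hθ : 0 ≤ θ) (hgap : 0 < r → a l ≤ θ + (s + 1) * h) :
    ∑ i ∈ range r, 1 / (cos θ - cos (a (l + i))) ≤
      ((s + 1) * (s + 3) * π ^ 2 / 4 + 1) * (1 + π ^ 2 * (s + 1) / 2 * log (n + 1)) *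
        ∑ i ∈ range r, (-1) ^ i / (cos θ - cos (a (l + i))) := by
  have hanti : AntitoneOn (fun i : ℕ => π - a (l + i) + i * h) (Set.Iio r) := by
    intro i hi j hj hij
    rw [Set.mem_Iio] at hi hj
    have := ha (Set.mem_Iic.2 (by lia)) (Set.mem_Iic.2 (by lia)) (by lia : l + i ≤ l + j)
    push_cast at this ⊢
    linarith
  have hreflect : ∀ k, cos θ - cos (a k) = cos (π - a k) - cos (π - θ) := fun k => by
    rw [cos_pi_sub, cos_pi_sub, neg_sub_neg]
  simp only [hreflect]
  exact_mod_cast sum_one_div_cos_sub_cos_le (by lia : r ≤ n + 1) hh hs hanti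
    (fun i hi => sub_nonneg.2 (haπ _ (by lia))) (fun i hi => sub_lt_sub_left (haθ i hi) _)
    (sub_le_self _ hθ) (fun hr => by rw [add_zero]; linarith [hgap hr])

end SeparatedAngles

/-- The number `s` measures the slack `π / h - n`; a set of Chebyshev points has `h = π / N`. -/
theorem berrut_lebesgue_bound_chebyshev_subset_general {n : ℕ} {h s : ℝ} (hh : 0 < h)
    {a : ℕ → ℝ} (ha0 : 0 ≤ a 0) (ha : ∀ k < n, a k + h ≤ a (k + 1)) (haπ : a n ≤ π)
    (hs : π ≤ (n + s) * h) {y : ℕ → ℝ} (hy : ∀ k, y k = -cos (a k)) {x : ℝ}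
    (hx : x ∈ Set.Icc (-1) 1) (hxy : ∀ i ≤ n, x ≠ y i) :
    ∑ i ∈ range (n + 1), 1 / |x - y i| ≤
      ((s + 1) * (s + 3) * π ^ 2 / 4 + 1) * (1 + π ^ 2 * (s + 1) / 2 * log (n + 1)) *
        |∑ j ∈ range (n + 1), (-1) ^ j / (x - y j)| := by
  have hsep := monotoneOn_sub_mul_of_add_le ha
  have hlow := mul_le_of_add_le ha0 ha
  have hup := le_add_mul_of_add_le ha (haπ.trans hs)
  have hmono : MonotoneOn a (Set.Iic n) :=
    monotoneOn_of_le_add_one Set.ordConnected_Iic fun k _ _ hk => by linarith [ha k hk]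
  have ha_nonneg : ∀ k ≤ n, 0 ≤ a k := fun k hk =>
    (by positivity : 0 ≤ k * h).trans (hlow k hk)
  have ha_le_pi : ∀ k ≤ n, a k ≤ π := fun k hk => (hmono hk (Set.mem_Iic.2 le_rfl) hk).trans haπ
  have hs_nonneg : 0 ≤ s := nonneg_of_mul_nonneg_left (by linarith [hlow n le_rfl]) hh
  obtain ⟨θ, ⟨hθ0, hθπ⟩, hθ⟩ : ∃ θ ∈ Set.Icc 0 π, cos θ = -x :=
    ⟨arccos (-x), ⟨arccos_nonneg _, arccos_le_pi _⟩,
      cos_arccos (by linarith [hx.2]) (by linarith [hx.1])⟩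
  have hdist_left : ∀ k, x - y k = cos (a k) - cos θ := fun k => by rw [hy, hθ]; ring
  have hdist_right : ∀ k, y k - x = cos θ - cos (a k) := fun k => by rw [hy, hθ]; ring
  have hθ_ne : ∀ k < n + 1, θ ≠ a k := fun k hk hθa =>
    hxy k (by lia) (by rw [hy, ← hθa, hθ, neg_neg])
  obtain ⟨l, r, hlr, hl, hr⟩ : ∃ l r, l + r = n + 1 ∧ (∀ i < l, a i < θ) ∧ ∀ i < r, θ < a (l + i) :=
    exists_forall_lt_and_forall_gt (hmono.mono fun _ => Nat.le_of_lt_succ) hθ_ne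
  rw [← hlr]
  apply sum_one_div_abs_sub_le_of_sides
  · have : 0 ≤ log ((n : ℝ) + 1) := log_nonneg (by simp)
    positivity
  · intro i hi
    rw [← sub_pos, hdist_left]
    exact sub_pos.2 (cos_lt_cos_of_nonneg_of_le_pi (ha_nonneg i (by lia)) hθπ (hl i hi))
  · intro i hi
    rw [← sub_pos, hdist_right]
    exact sub_pos.2 (cos_lt_cos_of_nonneg_of_le_pi hθ0 (ha_le_pi _ (by lia)) (hr i hi))
  · simp only [hdist_left]
    exact sum_one_div_cos_sub_cos_le_left (by lia) hh.le hs_nonneg hsep ha_nonneg hl hθπ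
      (le_pred_add_mul_of_forall_lt hh.le hlow hup hlr hr (hθπ.trans hs))
  · simp only [hdist_right]
    exact sum_one_div_cos_sub_cos_le_right hlr hh.le hs_nonneg hsep ha_le_pi hr hθ0
      fun hr0 => le_add_mul_of_forall_gt hh.le hlow hup hl hθ0 (by lia)

theorem log_add_one_le_two_mul_log {x : ℝ} (hx : 2 ≤ x) : log (x + 1) ≤ 2 * log x := by
  rw [← log_rpow (by linarith), rpow_two]
  exact log_le_log (by linarith) (by nlinarith)

/-- The Lebesgue function of Berrut's rational interpolant at an (n+1)-element subset
of the Chebyshev points of the second kind (with `s` points removed) is bounded by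
`((s+1)(s+3)π²/4 + 1)(1 + π²(s+1) ln(N-s))`. -/
theorem berrut_lebesgue_bound_chebyshev_subset
    (N s : ℕ) (hs : s + 2 < N) (n : ℕ) (hn : n = N - s)
    (α : ℕ → ℕ) (hα : ∀ k, k < n → α k < α (k + 1)) (hαN : α n ≤ N)
    (y : ℕ → ℝ) (hy : ∀ k, y k = -Real.cos (α k * Real.pi / N)) :
    ∀ x ∈ Set.Icc (-1 : ℝ) 1, (∀ i ≤ n, x ≠ y i) →
      (∑ i ∈ Finset.range (n + 1), 1 / |x - y i|) ≤
        ((s + 1) * (s + 3) * Real.pi ^ 2 / 4 + 1) *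
          (1 + Real.pi ^ 2 * (s + 1) * Real.log ((N : ℝ) - s)) *
          |∑ j ∈ Finset.range (n + 1), (-1 : ℝ) ^ j / (x - y j)| := by
  intro x hx hxy
  obtain rfl : N = n + s := by lia
  have hN : (0 : ℝ) < (n + s : ℕ) := by exact_mod_cast (by lia : 0 < n + s)
  have hstep : ∀ k < n, (α k : ℝ) * π / (n + s : ℕ) + π / (n + s : ℕ) ≤
      α (k + 1) * π / (n + s : ℕ) := fun k hk => by
    rw [← add_div, ← add_one_mul]
    gcongr
    exact_mod_cast hα k hk
  have hlast : (α n : ℝ) * π / (n + s : ℕ) ≤ π := by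
    rw [div_le_iff₀ hN, mul_comm]
    gcongr
  have hcover : π ≤ (n + s) * (π / (n + s : ℕ)) := by
    rw [← Nat.cast_add, mul_div_cancel₀ _ hN.ne']
  have hlog : log (n + 1) ≤ 2 * log n :=
    log_add_one_le_two_mul_log (by exact_mod_cast (by lia : 2 ≤ n))
  grw [berrut_lebesgue_bound_chebyshev_subset_general (s := s) (by positivity) (by positivity)
    hstep hlast hcover hy hx hxy, hlog]
  rw [show ((n + s : ℕ) : ℝ) - s = n by push_cast; ring]
  apply le_of_eq
  ring
end

section
/- Let n ≥ 0, let x_0, ..., x_n be distinct real numbers, let f_0, ..., f_n be real values, set w_i = 1/Π_{k≠i}(x_i - x_k), and let P be the unique polynomial of degree at most n with P(x_i) = f_i for all i. Then for every real x with x ≠ x_i for all i: Σ_{j=0}^n w_j/(x - x_j) ≠ 0 and P(x) = (Σ_{i=0}^n (w_i/(x - x_i)) f_i) / (Σ_{j=0}^n w_j/(x - x_j)). -/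
open Finset Polynomial

/-! The Lagrange basis polynomial at `i` takes the value `L(z) * w i / (z - v i)` at `z`, where
`L(z) = ∏ k, (z - v k)`; hence `P(z) = L(z) * ∑ i, w i / (z - v i) * P(v i)`. For `P = 1` this shows
that the denominator is nonzero, and dividing the two identities cancels `L(z)`. -/

theorem one_div_prod_erase_sub_div_eq_nodalWeight_mul_inv {ι F : Type*} [DecidableEq ι] [Field F]
    (s : Finset ι) (v : ι → F) (z : F) (i : ι) :
    (1 / ∏ k ∈ s.erase i, (v i - v k)) / (z - v i) =
      Lagrange.nodalWeight s v i * (z - v i)⁻¹ := by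
  rw [Lagrange.nodalWeight, prod_inv_distrib, one_div, div_eq_mul_inv]

theorem barycentric_formula_general {ι F : Type*} [DecidableEq ι] [Field F]
    {s : Finset ι} (hs : s.Nonempty) {v : ι → F} (hv : Set.InjOn v s) {r : ι → F}
    {P : F[X]} (hdeg : P.degree < #s) (hinterp : ∀ i ∈ s, P.eval (v i) = r i)
    {z : F} (hz : ∀ i ∈ s, z ≠ v i) :
    (∑ j ∈ s, (1 / ∏ k ∈ s.erase j, (v j - v k)) / (z - v j)) ≠ 0 ∧
      P.eval z =
        (∑ i ∈ s, ((1 / ∏ k ∈ s.erase i, (v i - v k)) / (z - v i)) * r i) /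
          (∑ j ∈ s, (1 / ∏ k ∈ s.erase j, (v j - v k)) / (z - v j)) := by
  simp only [one_div_prod_erase_sub_div_eq_nodalWeight_mul_inv]
  refine ⟨Lagrange.sum_nodalWeight_mul_inv_sub_ne_zero hv hz hs, ?_⟩
  rw [Lagrange.eq_interpolate_of_eval_eq r hv hdeg hinterp,
    Lagrange.eval_interpolate_not_at_node' r hv hs hz]

/-- The second (true) barycentric formula for Lagrange polynomial interpolation:
with barycentric weights `w_i = 1/∏_{k≠i}(x_i - x_k)`, the denominator
`Σ w_j/(x - x_j)` never vanishes away from the nodes, and the interpolating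
polynomial equals the barycentric quotient. -/
theorem barycentric_formula
    (n : ℕ) (x : ℕ → ℝ) (f : ℕ → ℝ)
    (hx : ∀ i ≤ n, ∀ j ≤ n, x i = x j → i = j)
    (P : Polynomial ℝ) (hdeg : P.natDegree ≤ n)
    (hinterp : ∀ i ≤ n, P.eval (x i) = f i) :
    ∀ z : ℝ, (∀ i ≤ n, z ≠ x i) →
      (∑ j ∈ Finset.range (n + 1),
        (1 / ∏ k ∈ (Finset.range (n + 1)).erase j, (x j - x k)) / (z - x j)) ≠ 0 ∧
      P.eval z =
        (∑ i ∈ Finset.range (n + 1),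
          ((1 / ∏ k ∈ (Finset.range (n + 1)).erase i, (x i - x k)) / (z - x i)) * f i) /
        (∑ j ∈ Finset.range (n + 1),
          (1 / ∏ k ∈ (Finset.range (n + 1)).erase j, (x j - x k)) / (z - x j)) := by
  simp only [← mem_range_succ_iff] at hx hinterp ⊢
  have hdeg_lt : P.degree < #(range (n + 1)) := by
    rw [card_range]
    exact degree_le_natDegree.trans_lt (Nat.cast_lt.mpr (Nat.lt_succ_of_le hdeg))
  exact fun _ ↦ barycentric_formula_general nonempty_range_add_one
    (fun i hi j hj ↦ hx i (mem_coe.mp hi) j (mem_coe.mp hj)) hdeg_lt hinterp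
end
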